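/- Fourth-order two-body error term (paper eq. A17d): for i ≠ j and any phase-space point (x,p) with r_ij ≠ 0, the left-nested canonical Poisson bracket satisfies {{{{V_ij, T}, V_ij}, T}, V_ij}(x,p) = −4 G³ (m i)(m j)((m i)+(m j))² / r_ij⁷. -/

import Mathlib

open scoped RealInnerProductSpace BigOperators

noncomputable section

/-- Three-dimensional Euclidean space. -/
abbrev E3 : Type := EuclideanSpace ℝ (Fin 3)

/-- Phase space for `N` particles: positions and momenta. -/
abbrev Phase (N : ℕ) : Type := (Fin N → E3) × (Fin N → E3)

/-- Gradient of a phase-space function with respect to the `k`-th position. -/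
def gradPos {N : ℕ} (A : Phase N → ℝ) (k : Fin N) (w : Phase N) : E3 :=
  gradient (fun y => A (Function.update w.1 k y, w.2)) (w.1 k)

/-- Gradient of a phase-space function with respect to the `k`-th momentum. -/
def gradMom {N : ℕ} (A : Phase N → ℝ) (k : Fin N) (w : Phase N) : E3 :=
  gradient (fun y => A (w.1, Function.update w.2 k y)) (w.2 k)

/-- Canonical Poisson bracket of two phase-space functions. -/
def poisson {N : ℕ} (A B : Phase N → ℝ) (w : Phase N) : ℝ :=
  ∑ k, (⟪gradPos A k w, gradMom B k w⟫ - ⟪gradMom A k w, gradPos B k w⟫)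

/-- Kinetic energy `T = Σ_i ‖p_i‖²/(2 m_i)`. -/
def kinetic {N : ℕ} (m : Fin N → ℝ) (w : Phase N) : ℝ :=
  ∑ i, ‖w.2 i‖ ^ 2 / (2 * m i)

/-- Pair potential `V_ij = −G m_i m_j / ‖x_i − x_j‖`. -/
def pairPot {N : ℕ} (G : ℝ) (m : Fin N → ℝ) (i j : Fin N) (w : Phase N) : ℝ :=
  -(G * m i * m j) / ‖w.1 i - w.1 j‖

/-- Sign of particle `k` in the difference `x i - x j`. -/
def sgn {N : ℕ} (i j k : Fin N) : ℝ := (if k = i then 1 else 0) - (if k = j then 1 else 0)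

lemma sgn_self_left {N : ℕ} {i j : Fin N} (h : i ≠ j) : sgn i j i = 1 := by simp [sgn, h]

lemma sgn_self_right {N : ℕ} {i j : Fin N} (h : i ≠ j) : sgn i j j = -1 := by
  simp [sgn, h.symm]

lemma sum_sgn {N : ℕ} (i j : Fin N) (f : Fin N → ℝ) : ∑ k, sgn i j k * f k = f i - f j := by
  simp [sgn, sub_mul, Finset.sum_sub_distrib]

lemma update_diff {N : ℕ} (i j k : Fin N) (x : Fin N → E3) (y : E3) :
    Function.update x k y i - Function.update x k y j
      = (x i - x j) + sgn i j k • (y - x k) := by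
  unfold sgn
  by_cases h1 : k = i <;> by_cases h2 : k = j
  · subst h1; subst h2; simp
  · subst h1; simp [Function.update_of_ne (Ne.symm h2), h2]
  · subst h2; simp [Function.update_of_ne (Ne.symm h1), h1]
  · simp [Function.update_of_ne (Ne.symm h1), Function.update_of_ne (Ne.symm h2), h1, h2]

lemma update_vel {N : ℕ} (m : Fin N → ℝ) (i j k : Fin N) (p : Fin N → E3) (y : E3) :
    (m i)⁻¹ • Function.update p k y i - (m j)⁻¹ • Function.update p k y j
      = ((m i)⁻¹ • p i - (m j)⁻¹ • p j) + (sgn i j k * (m k)⁻¹) • (y - p k) := by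
  unfold sgn
  by_cases h1 : k = i <;> by_cases h2 : k = j
  · subst h1; subst h2; simp
  · subst h1; simp [Function.update_of_ne (Ne.symm h2), h2, smul_sub]
  · subst h2; simp [Function.update_of_ne (Ne.symm h1), h1, smul_sub]; abel
  · simp [Function.update_of_ne (Ne.symm h1), Function.update_of_ne (Ne.symm h2), h1, h2]

lemma hasGradientAt_pow (D a : E3) (hD : ‖D‖ ≠ 0) (s c : ℝ) (n : ℕ) :
    HasGradientAt (fun y : E3 => c / ‖D + s • (y - a)‖ ^ n)
      ((s * (-(n * c) / ‖D‖ ^ (n + 2))) • D) a := by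
  have hL : HasFDerivAt (fun y : E3 => D + s • (y - a)) (s • ContinuousLinearMap.id ℝ E3) a :=
    (((hasFDerivAt_id a).sub_const a).const_smul s).const_add D
  have hval : D + s • (a - a) = D := by simp
  have hsq := hL.norm_sq
  have hpos : 0 < ‖D‖ := lt_of_le_of_ne (norm_nonneg _) (Ne.symm hD)
  have hs := hsq.sqrt (by simp [hpos.ne'])
  have h3 : HasDerivAt (fun t : ℝ => c / t ^ n) (-(n * c) / ‖D‖ ^ (n + 1)) ‖D‖ := by
    have := (hasDerivAt_const ‖D‖ c).div (hasDerivAt_pow n ‖D‖) (pow_ne_zero n hD)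
    refine this.congr_deriv ?_
    rcases n with _ | n
    · simp
    · simp only [Nat.add_sub_cancel]
      field_simp
      push_cast
      ring
  simp only [Real.sqrt_sq (norm_nonneg _)] at hs
  have h4 := HasDerivAt.comp_hasFDerivAt_of_eq a h3 hs (by simp)
  rw [hasGradientAt_iff_hasFDerivAt]
  refine h4.congr_fderiv ?_
  ext z
  simp [inner_smul_left, inner_smul_right]
  field_simp
  try ring

lemma gradPos_pow {N : ℕ} (A : Phase N → ℝ) (i j : Fin N) (c : ℝ) (n : ℕ)
    (hA : ∀ w : Phase N, ‖w.1 i - w.1 j‖ ≠ 0 → A w = c / ‖w.1 i - w.1 j‖ ^ n)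
    (w : Phase N) (hr : ‖w.1 i - w.1 j‖ ≠ 0) (k : Fin N) :
    gradPos A k w = (sgn i j k * (-(n * c) / ‖w.1 i - w.1 j‖ ^ (n + 2))) • (w.1 i - w.1 j) := by
  apply HasGradientAt.gradient
  refine (hasGradientAt_pow (w.1 i - w.1 j) (w.1 k) hr (sgn i j k) c n).congr_of_eventuallyEq ?_
  have hc : ContinuousAt (fun y : E3 => ‖(w.1 i - w.1 j) + sgn i j k • (y - w.1 k)‖) (w.1 k) := by
    fun_prop
  filter_upwards [hc.eventually_ne (y := 0) (by simpa using hr)] with y hy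
  rw [hA] <;> simp only [update_diff]
  exact hy

lemma gradMom_of_indep {N : ℕ} (A : Phase N → ℝ) (w : Phase N)
    (h : ∀ q, A (w.1, q) = A w) (k : Fin N) : gradMom A k w = 0 := by
  unfold gradMom
  simp only [h]
  exact gradient_const (w.2 k) _

lemma gradPos_kinetic {N : ℕ} (m : Fin N → ℝ) (w : Phase N) (k : Fin N) :
    gradPos (kinetic m) k w = 0 := by
  unfold gradPos kinetic
  exact gradient_const (𝕜 := ℝ) (w.1 k) (∑ i, ‖w.2 i‖ ^ 2 / (2 * m i))

lemma gradMom_kinetic {N : ℕ} (m : Fin N → ℝ) (w : Phase N) (k : Fin N) :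
    gradMom (kinetic m) k w = (m k)⁻¹ • w.2 k := by
  apply HasGradientAt.gradient
  have h1 : (fun y => kinetic m (w.1, Function.update w.2 k y)) = fun y : E3 =>
      ‖y‖ ^ 2 * (2 * m k)⁻¹ + ∑ l ∈ Finset.univ.erase k, ‖w.2 l‖ ^ 2 / (2 * m l) := by
    funext y
    unfold kinetic
    rw [← Finset.add_sum_erase _ _ (Finset.mem_univ k)]
    congr 1
    · simp [div_eq_mul_inv]
    · refine Finset.sum_congr rfl fun l hl => ?_
      simp [Function.update_of_ne (Finset.ne_of_mem_erase hl)]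
  rw [h1, hasGradientAt_iff_hasFDerivAt]
  have := ((hasFDerivAt_id (𝕜 := ℝ) (w.2 k)).norm_sq.mul_const (2 * m k)⁻¹).add_const
    (∑ l ∈ Finset.univ.erase k, ‖w.2 l‖ ^ 2 / (2 * m l))
  refine this.congr_fderiv ?_
  ext z
  simp [inner_smul_left]
  ring

lemma gradMom_lin {N : ℕ} (B : Phase N → ℝ) (m : Fin N → ℝ) (i j : Fin N) (d : ℝ) (n : ℕ)
    (hB : ∀ w : Phase N, ‖w.1 i - w.1 j‖ ≠ 0 → B w = d / ‖w.1 i - w.1 j‖ ^ n *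
      ⟪w.1 i - w.1 j, (m i)⁻¹ • w.2 i - (m j)⁻¹ • w.2 j⟫)
    (w : Phase N) (hr : ‖w.1 i - w.1 j‖ ≠ 0) (k : Fin N) :
    gradMom B k w = (sgn i j k * (m k)⁻¹ * (d / ‖w.1 i - w.1 j‖ ^ n)) • (w.1 i - w.1 j) := by
  apply HasGradientAt.gradient
  have h1 : (fun y => B (w.1, Function.update w.2 k y)) = fun y : E3 =>
      d / ‖w.1 i - w.1 j‖ ^ n * ⟪w.1 i - w.1 j, ((m i)⁻¹ • w.2 i - (m j)⁻¹ • w.2 j)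
        + (sgn i j k * (m k)⁻¹) • (y - w.2 k)⟫ := by
    funext y
    rw [hB (w.1, Function.update w.2 k y) hr]
    simp only [update_vel]
  rw [h1, hasGradientAt_iff_hasFDerivAt]
  have hL : HasFDerivAt (fun y : E3 => ((m i)⁻¹ • w.2 i - (m j)⁻¹ • w.2 j)
        + (sgn i j k * (m k)⁻¹) • (y - w.2 k))
      ((sgn i j k * (m k)⁻¹) • ContinuousLinearMap.id ℝ E3) (w.2 k) :=
    (((hasFDerivAt_id (w.2 k)).sub_const (w.2 k)).const_smul (sgn i j k * (m k)⁻¹)).const_add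
      ((m i)⁻¹ • w.2 i - (m j)⁻¹ • w.2 j)
  have := (((innerSL ℝ (w.1 i - w.1 j)).hasFDerivAt.comp (w.2 k) hL).const_mul
    (d / ‖w.1 i - w.1 j‖ ^ n))
  refine this.congr_fderiv ?_
  ext z
  simp [inner_smul_left, inner_smul_right]
  ring

lemma poisson_T {N : ℕ} (A : Phase N → ℝ) (m : Fin N → ℝ) (i j : Fin N) (c : ℝ) (n : ℕ)
    (hA : ∀ w : Phase N, ‖w.1 i - w.1 j‖ ≠ 0 → A w = c / ‖w.1 i - w.1 j‖ ^ n)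
    (w : Phase N) (hr : ‖w.1 i - w.1 j‖ ≠ 0) :
    poisson A (kinetic m) w = (-(n * c)) / ‖w.1 i - w.1 j‖ ^ (n + 2) *
      ⟪w.1 i - w.1 j, (m i)⁻¹ • w.2 i - (m j)⁻¹ • w.2 j⟫ := by
  unfold poisson
  simp only [gradPos_kinetic, gradMom_kinetic, gradPos_pow A i j c n hA w hr, inner_zero_right,
    sub_zero, real_inner_smul_left, mul_assoc]
  rw [sum_sgn i j, inner_sub_right]
  ring

lemma poisson_V {N : ℕ} (B : Phase N → ℝ) (G : ℝ) (m : Fin N → ℝ) (i j : Fin N) (hij : i ≠ j)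
    (d : ℝ) (n : ℕ)
    (hB : ∀ w : Phase N, ‖w.1 i - w.1 j‖ ≠ 0 → B w = d / ‖w.1 i - w.1 j‖ ^ n *
      ⟪w.1 i - w.1 j, (m i)⁻¹ • w.2 i - (m j)⁻¹ • w.2 j⟫)
    (w : Phase N) (hr : ‖w.1 i - w.1 j‖ ≠ 0) :
    poisson B (pairPot G m i j) w =
      (-(d * (G * m i * m j) * ((m i)⁻¹ + (m j)⁻¹))) / ‖w.1 i - w.1 j‖ ^ (n + 1) := by
  unfold poisson
  have hV := gradPos_pow (pairPot G m i j) i j (-(G * m i * m j)) 1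
    (fun w _ => by simp [pairPot]) w hr
  have hV' := gradMom_of_indep (pairPot G m i j) w (fun q => rfl)
  simp only [hV, hV', gradMom_lin B m i j d n hB w hr, inner_zero_right,
    zero_sub, real_inner_smul_left, real_inner_smul_right, mul_assoc,
    real_inner_self_eq_norm_sq]
  rw [Finset.sum_neg_distrib, sum_sgn i j, sgn_self_left hij, sgn_self_right hij]
  generalize (m i)⁻¹ = a
  generalize (m j)⁻¹ = b
  field_simp
  push_cast
  ring

/-- Fourth-order two-body error term (paper eq. A17d):
`{{{{V_ij,T},V_ij},T},V_ij} = −4 G³ m_i m_j (m_i + m_j)² / r_ij⁷`. -/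
theorem fourth_order_VTVTV {N : ℕ} (G : ℝ) (hG : 0 < G) (m : Fin N → ℝ)
    (hm : ∀ i, 0 < m i) (i j : Fin N) (hij : i ≠ j) (w : Phase N)
    (hr : ‖w.1 i - w.1 j‖ ≠ 0) :
    poisson (poisson (poisson (poisson (pairPot G m i j) (kinetic m))
        (pairPot G m i j)) (kinetic m)) (pairPot G m i j) w =
      -4 * G ^ 3 * m i * m j * (m i + m j) ^ 2 / ‖w.1 i - w.1 j‖ ^ 7 := by
  have h1 := poisson_T (pairPot G m i j) m i j (-(G * m i * m j)) 1
    (fun w _ => by simp [pairPot])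
  have h2 := poisson_V _ G m i j hij _ _ h1
  have h3 := poisson_T _ m i j _ _ h2
  have h4 := poisson_V _ G m i j hij _ _ h3
  rw [h4 w hr]
  have hi := (hm i).ne'
  have hj := (hm j).ne'
  push_cast
  field_simp
  ring
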